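/- arXiv:2605.19822 — 3 statements merged into one kernel-verified Lean document; each statement's English description precedes it below -/
import Mathlib

section
/- Data processing inequality for a Markov chain X → Z → W on finite types: let p_X be a pmf on a finite type X, let k assign to each x a pmf k(·|x) on a finite type Z, and let m assign to each z a pmf m(·|z) on a finite type W. Define the joint pmf p(x,z,w) = p_X(x)·k(z|x)·m(w|z) on X × Z × W. Then the mutual information between X and W under the (X,W)-marginal of p is at most the mutual information between X and Z under the (X,Z)-marginal of p: I(X;W) ≤ I(X;Z). -/
/-- The log-sum inequality for finite sums of nonnegative reals. -/
theorem sum_mul_log_sum_div_sum_le {ι : Type*} [Fintype ι] (a b : ι → ℝ)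
    (ha : ∀ i, 0 ≤ a i) (hb : ∀ i, 0 ≤ b i) (hab : ∀ i, b i = 0 → a i = 0) :
    (∑ i, a i) * Real.log ((∑ i, a i) / ∑ i, b i) ≤ ∑ i, a i * Real.log (a i / b i) := by
  set A := ∑ i, a i with hA
  set B := ∑ i, b i with hB
  rcases (Finset.sum_nonneg fun i _ => ha i : 0 ≤ A).eq_or_lt with hA0 | hApos
  · have ha0 : ∀ i, a i = 0 := fun i =>
      (Finset.sum_eq_zero_iff_of_nonneg fun j _ => ha j).1 hA0.symm i (Finset.mem_univ i)
    simp [hA, ha0]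
  have hBpos : 0 < B := by
    refine (Finset.sum_nonneg fun i _ => hb i).lt_of_ne fun hB0 => hApos.ne' ?_
    exact Finset.sum_eq_zero fun i hi =>
      hab i ((Finset.sum_eq_zero_iff_of_nonneg fun j _ => hb j).1 hB0.symm i hi)
  have hterm : ∀ i, a i * Real.log (A / B) - a i * Real.log (a i / b i) ≤ b i * (A / B) - a i := by
    intro i
    rcases (ha i).eq_or_lt with h0 | hai
    · have := mul_nonneg (hb i) (div_pos hApos hBpos).le
      simpa [← h0] using this
    have hbi : 0 < b i := (hb i).lt_of_ne fun h => hai.ne' (hab i h.symm)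
    have hlog : Real.log (A / B / (a i / b i)) ≤ A / B / (a i / b i) - 1 :=
      Real.log_le_sub_one_of_pos (by positivity)
    rw [Real.log_div (by positivity) (by positivity)] at hlog
    calc a i * Real.log (A / B) - a i * Real.log (a i / b i)
        = a i * (Real.log (A / B) - Real.log (a i / b i)) := by ring
      _ ≤ a i * (A / B / (a i / b i) - 1) := mul_le_mul_of_nonneg_left hlog hai.le
      _ = b i * (A / B) - a i := by field_simp
  have hsum := Finset.sum_le_sum fun i (_ : i ∈ Finset.univ) => hterm i
  rw [Finset.sum_sub_distrib, Finset.sum_sub_distrib, ← Finset.sum_mul, ← Finset.sum_mul,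
    ← hA, ← hB, mul_div_cancel₀ A hBpos.ne', sub_self] at hsum
  linarith

/-- Data processing inequality for a Markov chain `X → Z → W` on finite types:
`I(X;W) ≤ I(X;Z)`. -/
theorem data_processing_inequality
    {X Z W : Type*} [Fintype X] [Fintype Z] [Fintype W]
    (pX : X → ℝ) (k : X → Z → ℝ) (m : Z → W → ℝ)
    (hX0 : ∀ x, 0 ≤ pX x) (hX1 : ∑ x : X, pX x = 1)
    (hk0 : ∀ x z, 0 ≤ k x z) (hk1 : ∀ x, ∑ z : Z, k x z = 1)
    (hm0 : ∀ z w, 0 ≤ m z w) (hm1 : ∀ z, ∑ w : W, m z w = 1) :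
    (∑ x : X, ∑ w : W, (∑ z : Z, pX x * k x z * m z w) *
        Real.log ((∑ z : Z, pX x * k x z * m z w) /
          ((∑ w' : W, ∑ z : Z, pX x * k x z * m z w') *
            (∑ x' : X, ∑ z : Z, pX x' * k x' z * m z w))))
      ≤
    (∑ x : X, ∑ z : Z, (∑ w : W, pX x * k x z * m z w) *
        Real.log ((∑ w : W, pX x * k x z * m z w) /
          ((∑ z' : Z, ∑ w : W, pX x * k x z' * m z' w) *
            (∑ x' : X, ∑ w : W, pX x' * k x' z * m z w)))) := by
  have hXZ : ∀ x z, ∑ w, pX x * k x z * m z w = pX x * k x z := fun x z => by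
    rw [← Finset.mul_sum, hm1, mul_one]
  have hX : ∀ x, ∑ z, pX x * k x z = pX x := fun x => by
    rw [← Finset.mul_sum, hk1, mul_one]
  have hX' : ∀ x, ∑ w, ∑ z, pX x * k x z * m z w = pX x := fun x => by
    rw [Finset.sum_comm]
    simp only [hXZ, hX]
  simp only [hX', hXZ, hX]
  refine Finset.sum_le_sum fun x _ => ?_
  have hq0 : ∀ z, 0 ≤ ∑ x', pX x' * k x' z := fun z =>
    Finset.sum_nonneg fun x' _ => mul_nonneg (hX0 x') (hk0 x' z)
  have hW : ∀ w, pX x * ∑ x', ∑ z, pX x' * k x' z * m z w =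
      ∑ z, pX x * (∑ x', pX x' * k x' z) * m z w := fun w => by
    rw [Finset.sum_comm, Finset.mul_sum]
    exact Finset.sum_congr rfl fun z _ => by rw [← Finset.sum_mul, mul_assoc]
  have hlogsum : ∀ w, (∑ z, pX x * k x z * m z w) * Real.log ((∑ z, pX x * k x z * m z w) /
      (pX x * ∑ x', ∑ z, pX x' * k x' z * m z w)) ≤
      ∑ z, pX x * k x z * m z w *
        Real.log (pX x * k x z / (pX x * ∑ x', pX x' * k x' z)) := by
    intro w
    rw [hW]
    refine (sum_mul_log_sum_div_sum_le _ _
      (fun z => mul_nonneg (mul_nonneg (hX0 x) (hk0 x z)) (hm0 z w))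
      (fun z => mul_nonneg (mul_nonneg (hX0 x) (hq0 z)) (hm0 z w)) fun z hz => ?_).trans_eq
      (Finset.sum_congr rfl fun z _ => ?_)
    · rcases mul_eq_zero.1 hz with h | h
      · rcases mul_eq_zero.1 h with h | h
        · simp [h]
        · rw [(Finset.sum_eq_zero_iff_of_nonneg fun x' _ => mul_nonneg (hX0 x') (hk0 x' z)).1 h x
            (Finset.mem_univ x), zero_mul]
      · simp [h]
    · by_cases h : m z w = 0
      · simp [h]
      · rw [mul_div_mul_right _ _ h]
  refine (Finset.sum_le_sum fun w _ => hlogsum w).trans_eq ?_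
  rw [Finset.sum_comm]
  exact Finset.sum_congr rfl fun z _ => by rw [← Finset.sum_mul, hXZ]
end

section
/- Combined compression bound for the information bottleneck: let p_X be a strictly positive pmf on a finite type X, let k assign to each x a pmf k(·|x) on a finite type Z, and let m assign to each z a pmf m(·|z) on a finite type W, and form the Markov-chain joint pmf p(x,z,w) = p_X(x)·k(z|x)·m(w|z). Then for every strictly positive pmf q on Z, the mutual information between X and W satisfies I(X;W) ≤ Σ_x p_X(x)·D( k(·|x) ‖ q ). -/
/-- The inequality `log t ≤ t - 1` at `t = r * q / (p * k)`, weighted by `k * m`. -/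
lemma mul_log_div_le_mul_log_div_add {k m r p q : ℝ} (hk : 0 ≤ k) (hm : 0 ≤ m) (hr : 0 ≤ r)
    (hp : 0 ≤ p) (hq : 0 < q) (hpos : 0 < k * m → 0 < r ∧ 0 < p) :
    k * m * Real.log (r / p) ≤ k * m * Real.log (k / q) + (m * q * (r / p) - k * m) := by
  rcases (mul_nonneg hk hm).eq_or_lt with h | h
  · rw [← h]
    have : 0 ≤ m * q * (r / p) := by positivity
    linarith
  · obtain ⟨hr', hp'⟩ := hpos h
    have hk' : 0 < k := pos_of_mul_pos_left h hm
    have hlog := Real.log_le_sub_one_of_pos (x := r / p / (k / q)) (by positivity)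
    rw [Real.log_div (by positivity) (by positivity)] at hlog
    have hmul := mul_le_mul_of_nonneg_left hlog h.le
    have hcancel : k * m * (r / p / (k / q) - 1) = m * q * (r / p) - k * m := by
      field_simp
    linarith

/-- Combined compression bound for the information bottleneck: for the Markov
chain `X → Z → W` and any strictly positive pmf `q` on `Z`,
`I(X;W) ≤ Σ_x p_X(x)·D(k(·|x) ‖ q)`. -/
theorem compression_bound
    {X Z W : Type*} [Fintype X] [Fintype Z] [Fintype W]
    (pX : X → ℝ) (k : X → Z → ℝ) (m : Z → W → ℝ)
    (hX0 : ∀ x, 0 < pX x) (hX1 : ∑ x : X, pX x = 1)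
    (hk0 : ∀ x z, 0 ≤ k x z) (hk1 : ∀ x, ∑ z : Z, k x z = 1)
    (hm0 : ∀ z w, 0 ≤ m z w) (hm1 : ∀ z, ∑ w : W, m z w = 1)
    (q : Z → ℝ) (hq0 : ∀ z, 0 < q z) (hq1 : ∑ z : Z, q z = 1) :
    (∑ x : X, ∑ w : W, (∑ z : Z, pX x * k x z * m z w) *
        Real.log ((∑ z : Z, pX x * k x z * m z w) /
          ((∑ w' : W, ∑ z : Z, pX x * k x z * m z w') *
            (∑ x' : X, ∑ z : Z, pX x' * k x' z * m z w))))
      ≤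
    (∑ x : X, pX x * (∑ z : Z, k x z * Real.log (k x z / q z))) := by
  set r : X → W → ℝ := fun x w => ∑ z, k x z * m z w with hr
  set p : W → ℝ := fun w => ∑ x, pX x * r x w with hp
  have hr0 : ∀ x w, 0 ≤ r x w := fun x w =>
    Finset.sum_nonneg fun z _ => mul_nonneg (hk0 x z) (hm0 z w)
  have hp0 : ∀ w, 0 ≤ p w := fun w =>
    Finset.sum_nonneg fun x _ => mul_nonneg (hX0 x).le (hr0 x w)
  have hjoint : ∀ x w, ∑ z, pX x * k x z * m z w = pX x * r x w := fun x w => by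
    simp only [hr, Finset.mul_sum, mul_assoc]
  have hr1 : ∀ x, ∑ w, r x w = 1 := fun x => by
    simp only [hr]
    rw [Finset.sum_comm]
    simp only [← Finset.mul_sum, hm1, mul_one, hk1]
  have hpos : ∀ x z w, 0 < k x z * m z w → 0 < r x w ∧ 0 < p w := fun x z w h => by
    have hrpos : 0 < r x w := h.trans_le <|
      Finset.single_le_sum (f := fun z => k x z * m z w)
        (fun z _ => mul_nonneg (hk0 x z) (hm0 z w)) (Finset.mem_univ z)
    exact ⟨hrpos, (mul_pos (hX0 x) hrpos).trans_le <|
      Finset.single_le_sum (f := fun x => pX x * r x w)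
        (fun x _ => mul_nonneg (hX0 x).le (hr0 x w)) (Finset.mem_univ x)⟩
  have hlhs : ∀ x w, (∑ z : Z, pX x * k x z * m z w) *
        Real.log ((∑ z : Z, pX x * k x z * m z w) /
          ((∑ w' : W, ∑ z : Z, pX x * k x z * m z w') *
            (∑ x' : X, ∑ z : Z, pX x' * k x' z * m z w))) =
      ∑ z, pX x * (k x z * m z w * Real.log (r x w / p w)) := fun x w => by
    simp only [hjoint, ← Finset.mul_sum, hr1, mul_one]
    rw [mul_div_mul_left _ _ (hX0 x).ne', ← Finset.sum_mul, mul_assoc]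
  have hrhs : ∀ x, ∑ z, k x z * Real.log (k x z / q z) =
      ∑ w, ∑ z, k x z * m z w * Real.log (k x z / q z) := fun x => by
    rw [Finset.sum_comm]
    refine Finset.sum_congr rfl fun z _ => ?_
    rw [← Finset.sum_mul, ← Finset.mul_sum, hm1, mul_one]
  have hmass : ∑ x, ∑ w, ∑ z, pX x * (k x z * m z w) = 1 := by
    simp only [← Finset.mul_sum]
    change ∑ x, pX x * ∑ w, r x w = 1
    simp only [hr1, mul_one, hX1]
  have hratio : ∑ x, ∑ w, ∑ z, pX x * (m z w * q z * (r x w / p w)) ≤ 1 := by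
    calc ∑ x, ∑ w, ∑ z, pX x * (m z w * q z * (r x w / p w))
        = ∑ w, (∑ z, m z w * q z) * (p w / p w) := by
          rw [Finset.sum_comm]
          refine Finset.sum_congr rfl fun w _ => ?_
          rw [show p w / p w = (∑ x, pX x * r x w) / p w from rfl, Finset.sum_div,
            Finset.mul_sum]
          refine Finset.sum_congr rfl fun x _ => ?_
          rw [Finset.sum_mul]
          exact Finset.sum_congr rfl fun z _ => by ring
      _ ≤ ∑ w, ∑ z, m z w * q z := Finset.sum_le_sum fun w _ =>
          mul_le_of_le_one_right
            (Finset.sum_nonneg fun z _ => mul_nonneg (hm0 z w) (hq0 z).le) (div_self_le_one _)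
      _ = 1 := by
          rw [Finset.sum_comm]
          simp only [← Finset.sum_mul, hm1, one_mul, hq1]
  simp only [hlhs, hrhs]
  calc ∑ x, ∑ w, ∑ z, pX x * (k x z * m z w * Real.log (r x w / p w))
      ≤ ∑ x, ∑ w, ∑ z, pX x * (k x z * m z w * Real.log (k x z / q z) +
          (m z w * q z * (r x w / p w) - k x z * m z w)) :=
        Finset.sum_le_sum fun x _ => Finset.sum_le_sum fun w _ => Finset.sum_le_sum fun z _ =>
          mul_le_mul_of_nonneg_left
            (mul_log_div_le_mul_log_div_add (hk0 x z) (hm0 z w) (hr0 x w) (hp0 w) (hq0 z)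
              (hpos x z w)) (hX0 x).le
    _ = ∑ x, pX x * ∑ w, ∑ z, k x z * m z w * Real.log (k x z / q z) +
          (∑ x, ∑ w, ∑ z, pX x * (m z w * q z * (r x w / p w)) -
            ∑ x, ∑ w, ∑ z, pX x * (k x z * m z w)) := by
        simp only [mul_add, mul_sub, Finset.sum_add_distrib, Finset.sum_sub_distrib,
          Finset.mul_sum]
    _ ≤ ∑ x, pX x * ∑ w, ∑ z, k x z * m z w * Real.log (k x z / q z) := by
        linarith
end

section
/- Optimality of the density-ratio discriminator: let P and Q be strictly positive pmfs on a finite type X, and define d*(x) = P(x)/(P(x)+Q(x)), which takes values in the open interval (0,1). Then for every function d : X → (0,1), Σ_x P(x)·log d(x) + Σ_x Q(x)·log(1−d(x)) ≤ Σ_x P(x)·log d*(x) + Σ_x Q(x)·log(1−d*(x)); that is, d* maximizes the binary cross-entropy discrimination objective between P and Q. -/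
/-- The tangent-line bound for `a * log t` at `t = a / c`. -/
theorem mul_log_le_mul_log_div_add {a c t : ℝ} (ha : 0 < a) (hc : 0 < c) (ht : 0 < t) :
    a * Real.log t ≤ a * Real.log (a / c) + (t * c - a) := by
  have hac : 0 < a / c := div_pos ha hc
  have hlog := Real.log_le_sub_one_of_pos (div_pos ht hac)
  rw [Real.log_div ht.ne' hac.ne'] at hlog
  have hmul := mul_le_mul_of_nonneg_left hlog ha.le
  have heq : a * (t / (a / c) - 1) = t * c - a := by field_simp
  linarith

/-- The function `t ↦ p * log t + q * log (1 - t)` on `(0, 1)` is maximal at `p / (p + q)`. -/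
theorem mul_log_add_mul_log_one_sub_le {p q t : ℝ} (hp : 0 < p) (hq : 0 < q)
    (ht0 : 0 < t) (ht1 : t < 1) :
    p * Real.log t + q * Real.log (1 - t)
      ≤ p * Real.log (p / (p + q)) + q * Real.log (1 - p / (p + q)) := by
  have hpq : 0 < p + q := add_pos hp hq
  have hsub : 1 - p / (p + q) = q / (p + q) := by
    field_simp
    ring
  rw [hsub]
  linarith [mul_log_le_mul_log_div_add hp hpq ht0,
    mul_log_le_mul_log_div_add hq hpq (sub_pos.2 ht1)]

/-- Optimality of the density-ratio discriminator `d*(x) = P(x)/(P(x)+Q(x))`: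
it takes values in `(0,1)` and maximizes the binary cross-entropy
discrimination objective between `P` and `Q`. -/
theorem density_ratio_discriminator_optimal
    {X : Type*} [Fintype X]
    (P Q : X → ℝ)
    (hP0 : ∀ x, 0 < P x) (hP1 : ∑ x : X, P x = 1)
    (hQ0 : ∀ x, 0 < Q x) (hQ1 : ∑ x : X, Q x = 1) :
    (∀ x, 0 < P x / (P x + Q x) ∧ P x / (P x + Q x) < 1)
    ∧
    (∀ d : X → ℝ, (∀ x, 0 < d x ∧ d x < 1) →
      (∑ x : X, P x * Real.log (d x)) + (∑ x : X, Q x * Real.log (1 - d x))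
        ≤ (∑ x : X, P x * Real.log (P x / (P x + Q x)))
          + (∑ x : X, Q x * Real.log (1 - P x / (P x + Q x)))) := by
  refine ⟨fun x => ⟨div_pos (hP0 x) (add_pos (hP0 x) (hQ0 x)), ?_⟩, fun d hd => ?_⟩
  · rw [div_lt_one (add_pos (hP0 x) (hQ0 x))]
    exact lt_add_of_pos_right _ (hQ0 x)
  · rw [← Finset.sum_add_distrib, ← Finset.sum_add_distrib]
    exact Finset.sum_le_sum fun x _ =>
      mul_log_add_mul_log_one_sub_le (hP0 x) (hQ0 x) (hd x).1 (hd x).2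
end
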